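/- arXiv:1406.4821 — 3 statements merged into one kernel-verified Lean document; each statement's English description precedes it below -/
import Mathlib

section
/- Let n ≥ 1, let p be a prime and k ≥ 2 an integer with p^k ∣ n and p^(k+1) ∤ n. Let u be the unit of ℤ/nℤ determined by the Chinese Remainder Theorem by the conditions u ≡ 1 + p^(k−1) (mod p^k) and u ≡ 1 (mod n/p^k). Then u has multiplicative order dividing p, and for the action of the cyclic subgroup C = ⟨u⟩ of (ℤ/nℤ)ˣ on the additive group ℤ/nℤ by multiplication, the second group cohomology H²(C, ℤ/nℤ) is trivial if p is odd or (p = 2 and k > 2), and has exactly 2 elements if p = 2 and k = 2. -/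
/-!
For a finite cyclic group generated by `g`, cohomology in positive even degrees is the kernel of
`g - 1` modulo the image of the norm. Let `q` be coprime to `n / q ^ k`, with `k ≥ 2`, and put
`e = u - 1`. Since `e` is `q ^ (k - 1)` modulo `q ^ k` and `0` modulo `n / q ^ k`, its annihilator
is the ideal `(q)`, and `e` itself is a multiple of `q`. Hence `e ^ 2 = 0` and `u ^ j = 1 + j e`, so
`u` has order `q`, the norm is multiplication by `N = q + (q choose 2) e`, and the cohomology is
`(q) / (N)`. If `k = 2` and `q ≡ 2 mod 4`, then `q choose 2` is odd and `(N) = (2q)`; in all other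
cases `(N) = (q)`.
-/

section EvenCohomology

universe u

open CategoryTheory Rep.FiniteCyclicGroup in
theorem card_groupCohomology_eq_relIndex_of_even {k G : Type u} [CommRing k] [CommGroup G]
    [Fintype G] (A : Rep k G) {g : G} (hg : ∀ x, x ∈ Subgroup.zpowers g) {i : ℕ} [NeZero i]
    (hi : Even i) :
    Nat.card (groupCohomology A i) =
      (LinearMap.range A.ρ.norm).toAddSubgroup.relIndex
        (LinearMap.ker (A.ρ g - 1)).toAddSubgroup := by
  let S := normHomCompSub A g
  have e := (groupCohomologyIsoEven A g hg i hi ≪≫ S.moduleCatHomologyIso).toLinearEquiv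
  have hrange : (LinearMap.range S.moduleCatToCycles).toAddSubgroup =
      (LinearMap.range A.ρ.norm).toAddSubgroup.addSubgroupOf
        (LinearMap.ker (A.ρ g - 1)).toAddSubgroup := by
    ext x
    exact exists_congr fun y ↦ Subtype.ext_iff
  rw [AddSubgroup.relIndex, ← hrange]
  exact Nat.card_congr e.toEquiv

theorem sum_zpowers_eq_sum_range_orderOf {G M : Type*} [Group G] [AddCommMonoid M] {x : G}
    (hx : IsOfFinOrder x) [Fintype (Subgroup.zpowers x)] (f : G → M) :
    ∑ y : Subgroup.zpowers x, f y = ∑ j ∈ Finset.range (orderOf x), f (x ^ j) := by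
  rw [← (finEquivZPowers hx).sum_comp, ← Fin.sum_univ_eq_sum_range fun j ↦ f (x ^ j)]
  simp only [finEquivZPowers_apply]

variable {R : Type} [CommRing R] {u : Rˣ}

theorem card_groupCohomology_zpowers_eq_relIndex_of_even (hu : IsOfFinOrder u) {i : ℕ} [NeZero i]
    (hi : Even i) :
    Nat.card (groupCohomology
      (Rep.of (Representation.ofDistribMulAction ℤ (Subgroup.zpowers u) R)) i) =
      (Ideal.span {∑ j ∈ Finset.range (orderOf u), (u : R) ^ j}).toAddSubgroup.relIndex
        (Ideal.torsionOf R R ((u : R) - 1)).toAddSubgroup := by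
  have : Finite (Subgroup.zpowers u) := hu.finite_zpowers
  let : Fintype (Subgroup.zpowers u) := Fintype.ofFinite _
  let ρ := Representation.ofDistribMulAction ℤ (Subgroup.zpowers u) R
  let g : Subgroup.zpowers u := ⟨u, Subgroup.mem_zpowers u⟩
  have hgen : ∀ x, x ∈ Subgroup.zpowers g := by
    rintro ⟨_, j, rfl⟩
    exact ⟨j, rfl⟩
  have hnorm (x : R) : ρ.norm x = x * ∑ j ∈ Finset.range (orderOf u), (u : R) ^ j := by
    rw [Representation.norm_ofDistribMulAction_eq, mul_comm, Finset.sum_mul]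
    exact sum_zpowers_eq_sum_range_orderOf hu fun v ↦ (v : R) * x
  have hrange : (LinearMap.range ρ.norm).toAddSubgroup =
      (Ideal.span {∑ j ∈ Finset.range (orderOf u), (u : R) ^ j}).toAddSubgroup := by
    ext x
    simp [Ideal.mem_span_singleton', hnorm]
  have hker : (LinearMap.ker (ρ g - 1)).toAddSubgroup =
      (Ideal.torsionOf R R ((u : R) - 1)).toAddSubgroup := by
    ext x
    simp [ρ, g, Subgroup.smul_def, Units.smul_def, mul_sub, mul_comm (u : R)]
  rw [card_groupCohomology_eq_relIndex_of_even _ hgen hi, ← hrange, ← hker]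

end EvenCohomology

section SquareZero

section Semiring

variable {R : Type*} [Semiring R] {e : R}

theorem one_add_pow_of_mul_self_eq_zero (he : e * e = 0) (n : ℕ) : (1 + e) ^ n = 1 + n * e := by
  induction n with
  | zero => simp
  | succ n ih =>
    rw [pow_succ, ih, mul_one_add, add_mul, one_mul, mul_assoc, he, mul_zero, add_zero, add_assoc,
      Nat.cast_succ, add_one_mul]

theorem geom_sum_one_add_of_mul_self_eq_zero (he : e * e = 0) (n : ℕ) :
    ∑ i ∈ Finset.range n, (1 + e) ^ i = n + n.choose 2 * e := by
  rw [Nat.choose_two_right, ← Finset.sum_range_id, Nat.cast_sum]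
  simp [one_add_pow_of_mul_self_eq_zero he, Finset.sum_add_distrib, Finset.sum_mul]

end Semiring

theorem orderOf_one_add_of_mul_self_eq_zero {R : Type*} [Ring R] {e : R} (he : e * e = 0) :
    orderOf (1 + e) = addOrderOf e := by
  refine Nat.dvd_right_iff_eq.mp fun n ↦ ?_
  rw [orderOf_dvd_iff_pow_eq_one, addOrderOf_dvd_iff_nsmul_eq_zero,
    one_add_pow_of_mul_self_eq_zero he, add_eq_left, nsmul_eq_mul]

end SquareZero

section Span

variable {R : Type*} [CommRing R] {a c e f : R}

theorem span_singleton_add_mul_eq_span_left (hae : a * e = 0) (hef : e = a * f)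
    (hc : a ∣ c ^ 2 * f) : Ideal.span {a + c * e} = Ideal.span {a} := by
  obtain ⟨s, hs⟩ := hc
  refine le_antisymm (Ideal.span_singleton_le_span_singleton.mpr ⟨1 + c * f, ?_⟩)
    (Ideal.span_singleton_le_span_singleton.mpr ⟨1 - c * f, ?_⟩)
  · rw [hef]
    ring
  · linear_combination s * hae + e * hs - c * hef

theorem span_singleton_add_mul_eq_span_two_mul (hae : a * e = 0) (hef : e = a * f)
    (hc : a ∣ 2 * c) (hcf : Odd (c * f)) : Ideal.span {a + c * e} = Ideal.span {2 * a} := by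
  obtain ⟨s, hs⟩ := hc
  obtain ⟨r, hr⟩ := hcf
  refine le_antisymm (Ideal.span_singleton_le_span_singleton.mpr ⟨1 + r, ?_⟩)
    (Ideal.span_singleton_le_span_singleton.mpr ⟨2, ?_⟩)
  · linear_combination c * hef + a * hr
  · linear_combination -s * hae - e * hs

end Span

theorem dvd_choose_two_sq {q : ℕ} (hq : q % 4 ≠ 2) : q ∣ q.choose 2 ^ 2 := by
  obtain ⟨r, rfl⟩ | ⟨r, rfl⟩ : Odd q ∨ 4 ∣ q := by grind
  · refine Dvd.dvd.pow ⟨r, ?_⟩ two_ne_zero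
    rw [Nat.choose_two_right, Nat.add_sub_cancel, mul_left_comm, Nat.mul_div_cancel_left _ two_pos]
  · refine ⟨r * (4 * r - 1) ^ 2, ?_⟩
    rw [Nat.choose_two_right, show 4 * r * (4 * r - 1) = 2 * (2 * r * (4 * r - 1)) by ring,
      Nat.mul_div_cancel_left _ two_pos]
    ring

theorem dvd_two_mul_choose_two (q : ℕ) : q ∣ 2 * q.choose 2 := by
  rw [Nat.choose_two_right, Nat.mul_div_cancel' (Nat.even_mul_pred_self q).two_dvd]
  exact dvd_mul_right q (q - 1)

theorem odd_choose_two {q : ℕ} (hq : q % 4 = 2) : Odd (q.choose 2) := by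
  obtain ⟨r, rfl⟩ : ∃ r, q = 4 * r + 2 := ⟨q / 4, by omega⟩
  have hmul : (4 * r + 2) * (4 * r + 2 - 1) = 2 * ((2 * r + 1) * (4 * r + 1)) := by
    rw [Nat.add_sub_assoc one_le_two]
    ring
  rw [Nat.choose_two_right, hmul, Nat.mul_div_cancel_left _ two_pos]
  exact Odd.mul ⟨r, rfl⟩ ⟨2 * r, by ring⟩

section ZMod

variable {n d : ℕ}

theorem ker_castHom_eq_span (hd : d ∣ n) :
    RingHom.ker (ZMod.castHom hd (ZMod d)) = Ideal.span {(d : ZMod n)} := by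
  ext x
  obtain ⟨x, rfl⟩ := ZMod.intCast_surjective x
  rw [RingHom.mem_ker, map_intCast, ZMod.intCast_zmod_eq_zero_iff_dvd, Ideal.mem_span_singleton]
  refine ⟨fun h ↦ by simpa using map_dvd (Int.castRingHom (ZMod n)) h, fun h ↦ ?_⟩
  simpa [ZMod.intCast_zmod_eq_zero_iff_dvd] using map_dvd (ZMod.castHom hd (ZMod d)) h

theorem natCast_dvd_iff_castHom_eq_zero (hd : d ∣ n) {x : ZMod n} :
    (d : ZMod n) ∣ x ↔ ZMod.castHom hd (ZMod d) x = 0 := by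
  rw [← Ideal.mem_span_singleton, ← ker_castHom_eq_span hd, RingHom.mem_ker]

theorem index_span_natCast (hd : d ∣ n) :
    (Ideal.span {(d : ZMod n)}).toAddSubgroup.index = d := by
  rw [← ker_castHom_eq_span hd]
  exact (AddSubgroup.index_ker (ZMod.castHom hd (ZMod d)).toAddMonoidHom).trans <| by
    rw [AddMonoidHom.range_eq_top.mpr (ZMod.castHom_surjective hd), AddSubgroup.card_top,
      Nat.card_zmod]

theorem relIndex_span_natCast_mul {a b : ℕ} (hb : b ≠ 0) (h : a * b ∣ n) :
    (Ideal.span {((a * b : ℕ) : ZMod n)}).toAddSubgroup.relIndex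
      (Ideal.span {(b : ZMod n)}).toAddSubgroup = a := by
  have hle : Ideal.span {((a * b : ℕ) : ZMod n)} ≤ Ideal.span {(b : ZMod n)} :=
    Ideal.span_singleton_le_span_singleton.mpr (by simp)
  have hmul := AddSubgroup.relIndex_mul_index (Submodule.toAddSubgroup_mono hle)
  rw [index_span_natCast h, index_span_natCast (dvd_of_mul_left_dvd h)] at hmul
  exact Nat.eq_of_mul_eq_mul_right (Nat.pos_of_ne_zero hb) hmul

theorem natCast_dvd_castHom_iff {m : ℕ} (hdm : d ∣ m) (hmn : m ∣ n) {x : ZMod n} :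
    (d : ZMod m) ∣ ZMod.castHom hmn (ZMod m) x ↔ (d : ZMod n) ∣ x := by
  obtain ⟨x, rfl⟩ := ZMod.intCast_surjective x
  rw [natCast_dvd_iff_castHom_eq_zero hdm, natCast_dvd_iff_castHom_eq_zero (hdm.trans hmn)]
  simp

theorem natCast_mul_eq_zero_iff_dvd {a b : ℕ} (hn : a * b = n) (ha : a ≠ 0) {x : ZMod n} :
    (a : ZMod n) * x = 0 ↔ (b : ZMod n) ∣ x := by
  obtain ⟨x, rfl⟩ := ZMod.intCast_surjective x
  rw [natCast_dvd_iff_castHom_eq_zero (hn ▸ dvd_mul_left b a), map_intCast,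
    ZMod.intCast_zmod_eq_zero_iff_dvd, ← mul_dvd_mul_iff_left (Nat.cast_ne_zero.mpr ha),
    ← Nat.cast_mul, hn, ← ZMod.intCast_zmod_eq_zero_iff_dvd]
  simp

theorem addOrderOf_eq_of_torsionOf_eq_span (hd : d ∣ n) {e : ZMod n}
    (he : Ideal.torsionOf (ZMod n) (ZMod n) e = Ideal.span {(d : ZMod n)}) : addOrderOf e = d := by
  refine Nat.dvd_right_iff_eq.mp fun m ↦ ?_
  rw [addOrderOf_dvd_iff_nsmul_eq_zero, ← Nat.cast_smul_eq_nsmul (ZMod n),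
    ← Ideal.mem_torsionOf_iff, he, Ideal.mem_span_singleton, natCast_dvd_iff_castHom_eq_zero hd,
    map_natCast, ZMod.natCast_eq_zero_iff]

variable {q k : ℕ} {hdvd : q ^ (k + 1) ∣ n} {e : ZMod n}

theorem exists_eq_pow_mul_of_castHom_eq_pow
    (he : ZMod.castHom hdvd (ZMod (q ^ (k + 1))) e = (q : ZMod (q ^ (k + 1))) ^ k) :
    ∃ t : ZMod n, e = (q : ZMod n) ^ k * (1 + q * t) := by
  have hsub : ((q ^ (k + 1) : ℕ) : ZMod n) ∣ e - (q : ZMod n) ^ k := by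
    rw [natCast_dvd_iff_castHom_eq_zero hdvd, map_sub, he, map_pow, map_natCast, sub_self]
  obtain ⟨t, ht⟩ := hsub
  refine ⟨t, ?_⟩
  push_cast at ht
  linear_combination ht

theorem natCast_mul_eq_zero_of_castHom_eq_pow (hcop : q.Coprime (n / q ^ (k + 1)))
    (he : ZMod.castHom hdvd (ZMod (q ^ (k + 1))) e = (q : ZMod (q ^ (k + 1))) ^ k)
    (he' : ZMod.castHom (Nat.div_dvd_of_dvd hdvd) (ZMod (n / q ^ (k + 1))) e = 0) :
    (q : ZMod n) * e = 0 := by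
  have hdvd_pow : ((q ^ (k + 1) : ℕ) : ZMod n) ∣ q * e := by
    rw [natCast_dvd_iff_castHom_eq_zero hdvd, map_mul, he, map_natCast, ← pow_succ',
      ← Nat.cast_pow, ZMod.natCast_self]
  have hdvd_div : ((n / q ^ (k + 1) : ℕ) : ZMod n) ∣ q * e := by
    rw [natCast_dvd_iff_castHom_eq_zero (Nat.div_dvd_of_dvd hdvd), map_mul, he', mul_zero]
  have hmul := ((hcop.pow_left (k + 1)).cast (R := ZMod n)).mul_dvd hdvd_pow hdvd_div
  rwa [← Nat.cast_mul, Nat.mul_div_cancel' hdvd, ZMod.natCast_self, zero_dvd_iff] at hmul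

theorem torsionOf_eq_span_of_castHom_eq_pow (hq : q ≠ 0) (hcop : q.Coprime (n / q ^ (k + 1)))
    (he : ZMod.castHom hdvd (ZMod (q ^ (k + 1))) e = (q : ZMod (q ^ (k + 1))) ^ k)
    (he' : ZMod.castHom (Nat.div_dvd_of_dvd hdvd) (ZMod (n / q ^ (k + 1))) e = 0) :
    Ideal.torsionOf (ZMod n) (ZMod n) e = Ideal.span {(q : ZMod n)} := by
  ext x
  rw [Ideal.mem_torsionOf_iff, Ideal.mem_span_singleton, smul_eq_mul]
  constructor
  · intro hx
    have hcast := congrArg (ZMod.castHom hdvd (ZMod (q ^ (k + 1)))) hx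
    rw [map_mul, he, map_zero, mul_comm, ← Nat.cast_pow,
      natCast_mul_eq_zero_iff_dvd (pow_succ q k).symm (pow_ne_zero k hq)] at hcast
    exact (natCast_dvd_castHom_iff (dvd_pow_self q k.succ_ne_zero) hdvd).mp hcast
  · rintro ⟨y, rfl⟩
    rw [mul_right_comm, natCast_mul_eq_zero_of_castHom_eq_pow hcop he he', zero_mul]

theorem relIndex_span_add_choose_two_mul (hq : q ≠ 0) (hpow : q ^ (k + 2) ∣ n) {t : ZMod n}
    (he : e = q ^ (k + 1) * (1 + q * t)) (hqe : (q : ZMod n) * e = 0) :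
    (Ideal.span {(q : ZMod n) + q.choose 2 * e}).toAddSubgroup.relIndex
      (Ideal.span {(q : ZMod n)}).toAddSubgroup = if k = 0 ∧ q % 4 = 2 then 2 else 1 := by
  have hef : e = q * (q ^ k * (1 + q * t)) := by
    rw [he]
    ring
  split_ifs with h
  · obtain ⟨rfl, hq4⟩ := h
    have hq_even : Even q := Nat.even_iff.mpr (by lia)
    have hodd : Odd ((q.choose 2 : ZMod n) * (q ^ 0 * (1 + q * t))) := by
      rw [pow_zero, one_mul]
      exact (odd_choose_two hq4).natCast.mul (odd_one.add_even (hq_even.natCast.mul_right t))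
    have hdvd_choose : (q : ZMod n) ∣ 2 * q.choose 2 := by
      exact_mod_cast Nat.cast_dvd_cast (dvd_two_mul_choose_two q)
    have h2q : 2 * q ∣ n := (mul_dvd_mul_right hq_even.two_dvd q).trans (sq q ▸ hpow)
    rw [span_singleton_add_mul_eq_span_two_mul hqe hef hdvd_choose hodd]
    exact_mod_cast relIndex_span_natCast_mul hq h2q
  · have hdvd_sq : (q : ZMod n) ∣ (q.choose 2 : ZMod n) ^ 2 * (q ^ k * (1 + q * t)) := by
      by_cases hk : k = 0
      · exact Dvd.dvd.mul_right (mod_cast Nat.cast_dvd_cast (dvd_choose_two_sq (by tauto))) _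
      · exact ((dvd_pow_self _ hk).mul_right _).mul_left _
    rw [span_singleton_add_mul_eq_span_left hqe hef hdvd_sq, AddSubgroup.relIndex_self]

end ZMod

theorem coprime_div_pow_of_not_pow_succ_dvd {n p k : ℕ} (hp : p.Prime) (hdvd : p ^ k ∣ n)
    (hndvd : ¬ p ^ (k + 1) ∣ n) : p.Coprime (n / p ^ k) :=
  hp.coprime_iff_not_dvd.mpr fun h ↦ hndvd (pow_succ p k ▸ Nat.mul_dvd_of_dvd_div hdvd h)

theorem h2_cyclic_alpha_p_general
    (n q k : ℕ) (hk : 2 ≤ k) (hdvd : q ^ k ∣ n) (hcop : q.Coprime (n / q ^ k))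
    (u : (ZMod n)ˣ)
    (hu₁ : ZMod.castHom hdvd (ZMod (q ^ k)) (u : ZMod n) = 1 + (q : ZMod (q ^ k)) ^ (k - 1))
    (hu₂ : ZMod.castHom (Nat.div_dvd_of_dvd hdvd) (ZMod (n / q ^ k)) (u : ZMod n) = 1)
    (i : ℕ) [NeZero i] (hi : Even i) :
    orderOf u = q ∧
      Nat.card (groupCohomology (Rep.of
        (Representation.ofDistribMulAction ℤ (Subgroup.zpowers u) (ZMod n))) i) =
        if k = 2 ∧ q % 4 = 2 then 2 else 1 := by
  obtain ⟨k, rfl⟩ : ∃ j, k = j + 2 := Nat.exists_eq_add_of_le' hk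
  have hq : q ≠ 0 := by
    rintro rfl
    simp_all
  obtain ⟨e, he⟩ : ∃ e, (u : ZMod n) = 1 + e := ⟨u - 1, by ring⟩
  rw [he, map_add, map_one, add_right_inj] at hu₁
  rw [he, map_add, map_one, add_eq_left] at hu₂
  have htors := torsionOf_eq_span_of_castHom_eq_pow hq hcop hu₁ hu₂
  have hqe := natCast_mul_eq_zero_of_castHom_eq_pow hcop hu₁ hu₂
  obtain ⟨t, ht⟩ := exists_eq_pow_mul_of_castHom_eq_pow hu₁
  have hee : e * e = 0 := by
    nth_rewrite 1 [ht]
    linear_combination (q : ZMod n) ^ k * (1 + q * t) * hqe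
  have hord : orderOf u = q := by
    rw [← orderOf_units, he, orderOf_one_add_of_mul_self_eq_zero hee,
      addOrderOf_eq_of_torsionOf_eq_span ((dvd_pow_self q (by lia)).trans hdvd) htors]
  refine ⟨hord, ?_⟩
  rw [card_groupCohomology_zpowers_eq_relIndex_of_even (orderOf_pos_iff.mp (by lia)) hi, hord, he,
    geom_sum_one_add_of_mul_self_eq_zero hee, add_sub_cancel_left, htors,
    relIndex_span_add_choose_two_mul hq hdvd ht hqe]
  simp

theorem h2_cyclic_alpha_p
    (n : ℕ) (hn : 1 ≤ n) (p k : ℕ) (hp : p.Prime) (hk : 2 ≤ k)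
    (hdvd : p ^ k ∣ n) (hndvd : ¬ p ^ (k + 1) ∣ n)
    (u : (ZMod n)ˣ)
    (hu₁ : (ZMod.castHom hdvd (ZMod (p ^ k))) (u : ZMod n) =
      1 + (p : ZMod (p ^ k)) ^ (k - 1))
    (hu₂ : (ZMod.castHom (Nat.div_dvd_of_dvd hdvd) (ZMod (n / p ^ k))) (u : ZMod n) = 1) :
    orderOf u ∣ p ∧
      ((Odd p ∨ (p = 2 ∧ 2 < k)) →
        Subsingleton (groupCohomology.H2 (Rep.of
          (Representation.ofDistribMulAction ℤ (Subgroup.zpowers u) (ZMod n))))) ∧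
      ((p = 2 ∧ k = 2) →
        Nat.card (groupCohomology.H2 (Rep.of
          (Representation.ofDistribMulAction ℤ (Subgroup.zpowers u) (ZMod n)))) = 2) := by
  obtain ⟨hord, hcard⟩ := h2_cyclic_alpha_p_general n p k hk hdvd
    (coprime_div_pow_of_not_pow_succ_dvd hp hdvd hndvd) u hu₁ hu₂ 2 even_two
  refine ⟨hord.dvd, fun h ↦ ?_, fun h ↦ by simpa [h] using hcard⟩
  exact (Nat.card_eq_one_iff_unique.mp (hcard.trans (if_neg (by grind)))).1
end

section
/- Let G be a finite group with a cyclic normal subgroup N of order n such that the centralizer of N in G equals N. Let p be a prime and k ≥ 2 an integer with p^k ∣ n and p^(k+1) ∤ n, and assume that p is odd, or that p = 2 and k > 2. Let e be an integer with e ≡ 1 + p^(k−1) (mod p^k) and e ≡ 1 (mod n/p^k). If there exists x ∈ G such that x a x⁻¹ = a^e for all a ∈ N, then there exists d ∈ G of order p such that d a d⁻¹ = a^e for all a ∈ N and ⟨d⟩ ∩ N = 1. -/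
/-!
Let `α` be conjugation by `x` on `N`, that is `a ↦ a ^ e`, and put `s = 1 + e + ⋯ + e ^ (p - 1)`.
For `b` in `N` we have `(b * x) ^ p = b ^ s * x ^ p`, so we must solve `b ^ s = (x ^ p)⁻¹` in `N`.
As `α` has order `p`, the element `x ^ p` centralizes `N` and hence lies in it; it is fixed by `α`.
The fixed points of `α` are the `p`-th powers in `N`. So are the `s`-th powers: since `s ≡ p` modulo
`p ^ 2 * (n / p ^ k)`, we have `gcd(s, n) = p`. In cohomological terms, `Ĥ⁰(⟨α⟩, N) = 0`.
Finally `d = b * x` also induces `α`, so `d ^ i` lies in `N` only if `p` divides `i`.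
-/

section Arithmetic

theorem geom_sum_modEq {e M : ℤ} (he : e ≡ 1 [ZMOD M]) (r : ℕ) :
    ∑ i ∈ Finset.range r, e ^ i ≡ r [ZMOD M] := by
  simpa using Int.ModEq.sum (s := Finset.range r) fun i _ => he.pow i

theorem geom_sum_modEq_sq_of_odd {p : ℕ} (hp : Odd p) {e : ℤ} (he : e ≡ 1 [ZMOD p]) :
    ∑ i ∈ Finset.range p, e ^ i ≡ p [ZMOD (p : ℤ) ^ 2] := by
  obtain ⟨b, hb⟩ := he.symm.dvd
  obtain rfl : e = 1 + p * b := by linarith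
  simpa using (Int.modEq_iff_dvd.mpr (odd_sq_dvd_geom_sum₂_sub 1 b hp)).symm

theorem gcd_pow_mul_eq_of_modEq {s m : ℤ} {p k : ℕ} (hk : k ≠ 0)
    (hs : s ≡ p [ZMOD (p : ℤ) ^ 2 * m]) : Int.gcd s ((p : ℤ) ^ k * m) = p := by
  obtain ⟨c, hc⟩ := hs.symm.dvd
  obtain ⟨l, rfl⟩ := Nat.exists_eq_succ_of_ne_zero hk
  have hcop : IsCoprime (1 + p * m * c : ℤ) (p ^ l * m) :=
    .mul_right (.pow_right ⟨1, -(m * c), by ring⟩) ⟨1, -(p * c), by ring⟩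
  rw [show s = p * (1 + p * m * c) by linarith,
    show (p : ℤ) ^ (l + 1) * m = p * (p ^ l * m) by ring, Int.gcd_mul_left,
    Int.isCoprime_iff_gcd_eq_one.mp hcop, Int.natAbs_natCast, mul_one]

theorem modEq_one_of_modEq_one_add_pow {p e : ℤ} {j k : ℕ} (hj : j < k)
    (he : e ≡ 1 + p ^ (k - 1) [ZMOD p ^ k]) : e ≡ 1 [ZMOD p ^ j] := by
  have hpow : p ^ (k - 1) ≡ 0 [ZMOD p ^ j] :=
    Int.modEq_zero_iff_dvd.mpr (pow_dvd_pow _ (by lia))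
  simpa using (he.of_dvd (pow_dvd_pow _ hj.le)).trans (hpow.add_left 1)

theorem pow_mul_dvd_mul_sub_one_iff {p m e : ℤ} {k : ℕ} (hp : p ≠ 0) (hk : 2 ≤ k)
    (hpm : IsCoprime p m) (he₁ : e ≡ 1 + p ^ (k - 1) [ZMOD p ^ k]) (he₂ : e ≡ 1 [ZMOD m])
    (j : ℤ) : p ^ k * m ∣ j * (e - 1) ↔ p ∣ j := by
  obtain ⟨l, rfl⟩ := Nat.exists_eq_add_of_le' hk
  obtain ⟨t, ht⟩ := he₁.symm.dvd
  have he : e - 1 = p ^ (l + 1) * (1 + p * t) := by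
    rw [show l + 2 - 1 = l + 1 from rfl] at ht
    linear_combination ht
  have hunit : IsCoprime p (1 + p * t) := ⟨-t, 1, by ring⟩
  calc p ^ (l + 2) * m ∣ j * (e - 1)
      ↔ p ^ (l + 2) ∣ j * (e - 1) :=
        ⟨dvd_of_mul_right_dvd, fun h => hpm.pow_left.mul_dvd h (he₂.symm.dvd.mul_left j)⟩
    _ ↔ p ^ (l + 1) * p ∣ p ^ (l + 1) * (j * (1 + p * t)) := by
        rw [he, pow_succ _ (l + 1), mul_left_comm]
    _ ↔ p ∣ j * (1 + p * t) := mul_dvd_mul_iff_left (pow_ne_zero _ hp)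
    _ ↔ p ∣ j := ⟨hunit.dvd_of_dvd_mul_right, fun h => h.mul_right _⟩

theorem pow_mul_dvd_pow_sub_one_iff {p m e : ℤ} {k : ℕ} (hp : p ≠ 0) (hk : 2 ≤ k)
    (hpm : IsCoprime p m) (he₁ : e ≡ 1 + p ^ (k - 1) [ZMOD p ^ k]) (he₂ : e ≡ 1 [ZMOD m])
    (i : ℕ) : p ^ k * m ∣ e ^ i - 1 ↔ p ∣ i := by
  have he : e ≡ 1 [ZMOD p] := by simpa using modEq_one_of_modEq_one_add_pow (j := 1) hk he₁
  rw [← geom_sum_mul, pow_mul_dvd_mul_sub_one_iff hp hk hpm he₁ he₂, (geom_sum_modEq he i).dvd_iff]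

theorem gcd_geom_sum_pow_mul {p k : ℕ} {m e : ℤ} (hk : 2 ≤ k) (hpm : IsCoprime (p : ℤ) m)
    (hcase : Odd p ∨ 2 < k) (he₁ : e ≡ 1 + (p : ℤ) ^ (k - 1) [ZMOD (p : ℤ) ^ k])
    (he₂ : e ≡ 1 [ZMOD m]) : Int.gcd (∑ i ∈ Finset.range p, e ^ i) ((p : ℤ) ^ k * m) = p := by
  have hsq : ∑ i ∈ Finset.range p, e ^ i ≡ p [ZMOD (p : ℤ) ^ 2] := by
    rcases hcase with hodd | hk'
    · refine geom_sum_modEq_sq_of_odd hodd ?_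
      simpa using modEq_one_of_modEq_one_add_pow (j := 1) hk he₁
    · exact geom_sum_modEq (modEq_one_of_modEq_one_add_pow hk' he₁) p
  refine gcd_pow_mul_eq_of_modEq (by lia) (Int.modEq_iff_dvd.mpr ?_)
  exact hpm.pow_left.mul_dvd hsq.dvd (geom_sum_modEq he₂ p).dvd

end Arithmetic

section PowerAutomorphism

variable {G : Type*} [Group G] {N : Subgroup G} {e : ℤ} {x a : G}

theorem semiconjBy_pow_of_semiconjBy_zpow (h : SemiconjBy x a (a ^ e)) (i : ℕ) :
    SemiconjBy (x ^ i) a (a ^ e ^ i) := by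
  induction i with
  | zero => simp
  | succ i ih =>
    rw [pow_succ' x, pow_succ' e, zpow_mul]
    exact (h.zpow_right (e ^ i)).mul_left ih

theorem mul_pow_of_semiconjBy_zpow (h : SemiconjBy x a (a ^ e)) (r : ℕ) :
    (a * x) ^ r = a ^ (∑ i ∈ Finset.range r, e ^ i) * x ^ r := by
  induction r with
  | zero => simp
  | succ r ih =>
    set s := ∑ i ∈ Finset.range r, e ^ i
    calc (a * x) ^ (r + 1) = a * (x * a ^ s) * x ^ r := by rw [pow_succ', ih]; group
      _ = a * ((a ^ e) ^ s * x) * x ^ r := by rw [(h.zpow_right s).eq]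
      _ = a ^ (e * s + 1) * x ^ (r + 1) := by rw [← zpow_mul, zpow_add_one, pow_succ']; group
      _ = _ := by rw [geom_sum_succ]

theorem pow_mem_iff_exponent_dvd (hcent : Subgroup.centralizer (N : Set G) = N)
    (hx : ∀ a ∈ N, SemiconjBy x a (a ^ e)) (i : ℕ) :
    x ^ i ∈ N ↔ (Monoid.exponent N : ℤ) ∣ e ^ i - 1 := by
  have hcomm : ∀ a ∈ N, a * x ^ i = x ^ i * a ↔ a ^ e ^ i = a := fun a ha => by
    rw [(semiconjBy_pow_of_semiconjBy_zpow (hx a ha) i).eq, mul_left_inj, eq_comm]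
  calc x ^ i ∈ N ↔ ∀ a ∈ N, a * x ^ i = x ^ i * a := by
        conv_lhs => rw [← hcent]
        exact Subgroup.mem_centralizer_iff
    _ ↔ ∀ a ∈ N, a ^ e ^ i = a := forall₂_congr hcomm
    _ ↔ (Monoid.exponent N : ℤ) ∣ e ^ i - 1 := by
        simp [Group.exponent_dvd_sub_iff_zpow_eq_zpow, Subtype.ext_iff]

theorem exists_zpow_eq_of_zpow_eq_one {C : Type*} [Group C] [IsCyclic C] {f s : ℤ}
    (h : ∀ j : ℤ, (Nat.card C : ℤ) ∣ j * f → (Int.gcd s (Nat.card C) : ℤ) ∣ j)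
    {a : C} (ha : a ^ f = 1) : ∃ b : C, b ^ s = a := by
  obtain ⟨g, hg⟩ := IsCyclic.exists_zpow_surjective (G := C)
  obtain ⟨j, rfl⟩ := hg a
  have hord : orderOf g = Nat.card C := orderOf_eq_card_of_forall_mem_zpowers hg
  have hj : (Nat.card C : ℤ) ∣ j * f := by
    rwa [← hord, orderOf_dvd_iff_zpow_eq_one, zpow_mul]
  obtain ⟨c, rfl⟩ := h j hj
  refine ⟨g ^ (Int.gcdA s (Nat.card C) * c), ?_⟩
  rw [← zpow_mul, zpow_eq_zpow_iff_modEq, hord, mul_comm, ← mul_assoc]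
  refine Int.ModEq.mul_right c (Int.modEq_iff_dvd.mpr ⟨Int.gcdB s (Nat.card C), ?_⟩)
  rw [Int.gcd_eq_gcd_ab, add_sub_cancel_left]

theorem exists_mul_pow_eq_one [IsCyclic N] (hx : ∀ a ∈ N, SemiconjBy x a (a ^ e)) {r : ℕ}
    (hr : x ^ r ∈ N)
    (h : ∀ j : ℤ, (Nat.card N : ℤ) ∣ j * (e - 1) →
      (Int.gcd (∑ i ∈ Finset.range r, e ^ i) (Nat.card N) : ℤ) ∣ j) :
    ∃ b ∈ N, (b * x) ^ r = 1 := by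
  have hfix : ((⟨x ^ r, hr⟩ : N)⁻¹) ^ (e - 1) = 1 := by
    have hpow : (x ^ r) ^ e = x ^ r :=
      mul_right_cancel ((hx _ hr).eq.symm.trans (pow_mul_comm' x r).symm)
    ext
    simp [zpow_sub_one, hpow]
  obtain ⟨b, hb⟩ := exists_zpow_eq_of_zpow_eq_one h hfix
  refine ⟨b, b.2, ?_⟩
  rw [mul_pow_of_semiconjBy_zpow (hx b b.2), ← Subgroup.coe_zpow, hb]
  simp

theorem orderOf_eq_and_zpowers_inf_eq_bot {d : G} {r : ℕ} (hd : d ^ r = 1)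
    (h : ∀ i : ℕ, d ^ i ∈ N → r ∣ i) : orderOf d = r ∧ Subgroup.zpowers d ⊓ N = ⊥ := by
  have hord : orderOf d = r :=
    Nat.dvd_antisymm (orderOf_dvd_of_pow_eq_one hd) (h _ (by simp [pow_orderOf_eq_one]))
  refine ⟨hord, (Subgroup.eq_bot_iff_forall _).mpr ?_⟩
  rintro _ ⟨⟨z, rfl⟩, hz : d ^ z ∈ N⟩
  have hnatAbs : d ^ z.natAbs ∈ N := by
    obtain ⟨i, rfl | rfl⟩ := z.eq_nat_or_neg <;> simpa using hz
  exact orderOf_dvd_iff_zpow_eq_one.mp (hord ▸ Int.natCast_dvd.mpr (h _ hnatAbs))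

end PowerAutomorphism

theorem exists_complement_generating_alpha_p_general {G : Type*} [Group G] (N : Subgroup G)
    [IsCyclic N] (hcent : Subgroup.centralizer (N : Set G) = N) {p k m : ℕ} (hp : p ≠ 0)
    (hk : 2 ≤ k) (hcard : Nat.card N = p ^ k * m) (hpm : p.Coprime m) (hcase : Odd p ∨ 2 < k)
    {e : ℤ} (he₁ : e ≡ 1 + (p : ℤ) ^ (k - 1) [ZMOD (p : ℤ) ^ k]) (he₂ : e ≡ 1 [ZMOD m])
    {x : G} (hx : ∀ a ∈ N, x * a * x⁻¹ = a ^ e) :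
    ∃ d : G, orderOf d = p ∧ (∀ a ∈ N, d * a * d⁻¹ = a ^ e) ∧
      Subgroup.zpowers d ⊓ N = ⊥ := by
  have hn : (Nat.card N : ℤ) = (p : ℤ) ^ k * m := by exact_mod_cast hcard
  have hp' : (p : ℤ) ≠ 0 := by exact_mod_cast hp
  have hpm' : IsCoprime (p : ℤ) m := Nat.isCoprime_iff_coprime.mpr hpm
  have conj_iff (y a : G) : y * a * y⁻¹ = a ^ e ↔ SemiconjBy y a (a ^ e) := mul_inv_eq_iff_eq_mul
  simp only [conj_iff] at hx ⊢
  have hpow {y : G} (hy : ∀ a ∈ N, SemiconjBy y a (a ^ e)) (i : ℕ) : y ^ i ∈ N ↔ p ∣ i := by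
    rw [pow_mem_iff_exponent_dvd hcent hy, IsCyclic.exponent_eq_card, hn,
      pow_mul_dvd_pow_sub_one_iff hp' hk hpm' he₁ he₂, Int.natCast_dvd_natCast]
  obtain ⟨b, hb, hbx⟩ : ∃ b ∈ N, (b * x) ^ p = 1 := by
    refine exists_mul_pow_eq_one hx ((hpow hx p).mpr dvd_rfl) fun j hj => ?_
    rw [hn] at hj ⊢
    rw [gcd_geom_sum_pow_mul hk hpm' hcase he₁ he₂]
    exact (pow_mul_dvd_mul_sub_one_iff hp' hk hpm' he₁ he₂ j).mp hj
  have hact : ∀ a ∈ N, SemiconjBy (b * x) a (a ^ e) := fun a ha =>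
    .mul_left (Subgroup.mem_centralizer_iff.mp (hcent.ge (N.zpow_mem ha e)) b hb) (hx a ha)
  obtain ⟨hord, hinf⟩ := orderOf_eq_and_zpowers_inf_eq_bot hbx fun i => (hpow hact i).mp
  exact ⟨b * x, hord, hact, hinf⟩

theorem exists_complement_generating_alpha_p
    (G : Type*) [Group G] [Finite G] (N : Subgroup G) [N.Normal]
    (hNcyc : IsCyclic N) (n : ℕ) (hn : Nat.card N = n)
    (hcent : Subgroup.centralizer (N : Set G) = N)
    (p k : ℕ) (hp : p.Prime) (hk : 2 ≤ k)
    (hdvd : p ^ k ∣ n) (hndvd : ¬ p ^ (k + 1) ∣ n)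
    (hcase : Odd p ∨ (p = 2 ∧ 2 < k))
    (e : ℤ) (he₁ : e ≡ 1 + (p : ℤ) ^ (k - 1) [ZMOD (p : ℤ) ^ k])
    (he₂ : e ≡ 1 [ZMOD ((n / p ^ k : ℕ) : ℤ)])
    (x : G) (hx : ∀ a ∈ N, x * a * x⁻¹ = a ^ e) :
    ∃ d : G, orderOf d = p ∧ (∀ a ∈ N, d * a * d⁻¹ = a ^ e) ∧
      Subgroup.zpowers d ⊓ N = ⊥ := by
  have hpm : p.Coprime (n / p ^ k) :=
    hp.coprime_iff_not_dvd.mpr fun h => hndvd (Nat.mul_dvd_of_dvd_div hdvd h)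
  exact exists_complement_generating_alpha_p_general N hcent hp.ne_zero hk
    (hn.trans (Nat.mul_div_cancel' hdvd).symm) hpm (hcase.imp_right And.right) he₁ he₂ hx
end

section
/- Let p be an odd prime. Then the first group cohomology H¹(SL(2, 𝔽_p), 𝔽_p²) of the special linear group SL(2, ℤ/pℤ) with coefficients in its natural two-dimensional module (Fin 2 → ℤ/pℤ, with the action given by matrix–vector multiplication) is trivial. -/
/-- The natural two-dimensional representation of `SL(2, ℤ/pℤ)` on `Fin 2 → ℤ/pℤ`,
given by matrix–vector multiplication. -/
def SL2.naturalRep (p : ℕ) :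
    Representation (ZMod p) (Matrix.SpecialLinearGroup (Fin 2) (ZMod p)) (Fin 2 → ZMod p) :=
  (LinearEquiv.automorphismGroup.toLinearMapMonoidHom).comp
    Matrix.SpecialLinearGroup.toLin'

/-!
If `z` is central and `f` is a `1`-cocycle, expanding `f (z * g) = f (g * z)` in two ways gives
`(z - 1) (f g) = (g - 1) (f z)`. When `z - 1` acts invertibly, dividing by it shows that `f` is the
coboundary of `(z - 1)⁻¹ (f z)`. A scalar matrix `z = ζ` in `SL(n, R)` qualifies as soon as `ζ - 1`
is a unit; for `SL(2, ℤ/pℤ)` take `ζ = -1`.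
-/

open groupCohomology

universe u

section CenterKills

variable {k G : Type u} [CommRing k] [Group G] {A : Rep.{u} k G}

theorem cocycle₁_ρ_sub_self_of_commute (f : cocycles₁ A) {z g : G} (hzg : Commute z g) :
    A.ρ z (f g) - f g = A.ρ g (f z) - f z := by
  have expand := (mem_cocycles₁_iff f).1 f.2
  rw [sub_eq_sub_iff_add_eq_add]
  calc A.ρ z (f g) + f z = f (z * g) := (expand z g).symm
    _ = f (g * z) := by rw [hzg.eq]
    _ = A.ρ g (f z) + f g := expand g z

theorem subsingleton_H1_of_isUnit_ρ_sub_one {z : G} (hz : z ∈ Subgroup.center G)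
    (hunit : IsUnit (A.ρ z - 1)) : Subsingleton (H1 A) := by
  obtain ⟨hinj, hsurj⟩ := (Module.End.isUnit_iff _).1 hunit
  refine subsingleton_of_forall_eq 0 fun x ↦ ?_
  induction x using H1_induction_on with | h f => ?_
  obtain ⟨a, ha⟩ := hsurj (f z)
  rw [H1π_eq_zero_iff]
  refine ⟨a, funext fun g ↦ hinj ?_⟩
  have hzg : Commute z g := (Subgroup.mem_center_iff.1 hz g).symm
  have hρ : Commute (A.ρ z - 1) (A.ρ g - 1) :=
    ((hzg.map A.ρ).sub_left (.one_left _)).sub_right (.one_right _)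
  calc (A.ρ z - 1) ((A.ρ g - 1) a)
    _ = (A.ρ g - 1) ((A.ρ z - 1) a) := LinearMap.congr_fun hρ.eq a
    _ = (A.ρ g - 1) (f z) := by rw [ha]
    _ = (A.ρ z - 1) (f g) := (cocycle₁_ρ_sub_self_of_commute f hzg).symm

end CenterKills

section NaturalRep

variable (n R : Type u) [Fintype n] [DecidableEq n] [CommRing R]

/-- The natural representation of `SL(n, R)` on `n → R` by matrix–vector multiplication, encoded
like `SL2.naturalRep`, which is definitionally the case `n = Fin 2`, `R = ZMod p`. -/
def SL.naturalRep : Representation R (Matrix.SpecialLinearGroup n R) (n → R) :=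
  (LinearEquiv.automorphismGroup.toLinearMapMonoidHom).comp
    Matrix.SpecialLinearGroup.toLin'

variable {n R}

theorem SL.naturalRep_apply (g : Matrix.SpecialLinearGroup n R) (v : n → R) :
    SL.naturalRep n R g v = (g : Matrix n n R).mulVec v :=
  rfl

theorem SL.naturalRep_eq_algebraMap_of_eq_scalar {z : Matrix.SpecialLinearGroup n R} {ζ : R}
    (hz : Matrix.scalar n ζ = z) :
    SL.naturalRep n R z = algebraMap R (Module.End R (n → R)) ζ := by
  refine LinearMap.ext fun v ↦ ?_
  rw [SL.naturalRep_apply, ← hz, Matrix.scalar_apply, Matrix.diagonal_const_mulVec,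
    Module.algebraMap_end_apply]

theorem h1_SL2_natural_trivial_general {ζ : R} (hζ : ζ ^ Fintype.card n = 1)
    (hunit : IsUnit (ζ - 1)) : Subsingleton (H1 (Rep.of (SL.naturalRep n R))) := by
  let z : Matrix.SpecialLinearGroup n R := ⟨Matrix.scalar n ζ, by simpa using hζ⟩
  have hz : z ∈ Subgroup.center _ := Matrix.SpecialLinearGroup.mem_center_iff.2 ⟨ζ, hζ, rfl⟩
  refine subsingleton_H1_of_isUnit_ρ_sub_one hz ?_
  rw [Rep.of_ρ, SL.naturalRep_eq_algebraMap_of_eq_scalar (z := z) rfl,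
    ← map_one (algebraMap R _), ← map_sub]
  exact hunit.map _

end NaturalRep

theorem isUnit_neg_one_sub_one_zmod_of_odd {m : ℕ} (hm : Odd m) : IsUnit (-1 - 1 : ZMod m) := by
  rw [neg_sub_left, one_add_one_eq_two, IsUnit.neg_iff]
  exact (ZMod.isUnit_iff_coprime 2 m).2 (Nat.coprime_two_left.2 hm)

theorem h1_SL2_natural_trivial (p : ℕ) [Fact p.Prime] (hp : Odd p) :
    Subsingleton (groupCohomology.H1 (Rep.of (SL2.naturalRep p))) :=
  h1_SL2_natural_trivial_general (ζ := -1) (by simp) (isUnit_neg_one_sub_one_zmod_of_odd hp)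
end
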